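/- Let Φ be a max-G decision rule with G the Gini gain, and let T be ε-approximate w.r.t. (S, Φ). Then every internal vertex v of T satisfies GiniGain(S(T,v), σ_v) ≥ max_{σ ∈ 𝒮} GiniGain(S(T,v), σ) − 96ε, where σ_v is the split rule at v. -/

import Mathlib

/-- Edit distance (symmetric difference size) of two multisets. -/
def symmDist {α : Type} [DecidableEq α] (S S' : Multiset α) : ℕ :=
  (S - S').card + (S' - S).card

/-- Relative edit distance `ED*(S,S') = △(S,S') / max(|S|,|S'|)`. -/
noncomputable def edStar {α : Type} [DecidableEq α] (S S' : Multiset α) : ℝ :=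
  (symmDist S S' : ℝ) / ((max S.card S'.card : ℕ) : ℝ)

/-- Gini impurity of a multiset of labeled examples, labels given by `lab : α → Fin k`. -/
noncomputable def giniImp {α : Type} {k : ℕ} (lab : α → Fin k) (S : Multiset α) : ℝ :=
  1 - ∑ i : Fin k, (((S.filter fun x => lab x = i).card : ℝ) / (S.card : ℝ)) ^ 2

/-- Gini gain of a split rule `σ` on `S`. -/
noncomputable def giniGain {α : Type} {k : ℕ} (lab : α → Fin k) (σ : α → Bool)
    (S : Multiset α) : ℝ :=
  giniImp lab S
    - ((S.filter fun x => σ x = false).card : ℝ) / (S.card : ℝ) *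
        giniImp lab (S.filter fun x => σ x = false)
    - ((S.filter fun x => σ x = true).card : ℝ) / (S.card : ℝ) *
        giniImp lab (S.filter fun x => σ x = true)

/-- Binary decision trees: each internal vertex carries a split rule `α → Bool`. -/
inductive DTree (α : Type) where
  | leaf : DTree α
  | node : (α → Bool) → DTree α → DTree α → DTree α

/-- `Occurs T S t A` says that `t` is a subtree (vertex) of `T` and `A = S(T,v)` is
the submultiset of `S` reaching it. -/
inductive Occurs {α : Type} : DTree α → Multiset α → DTree α → Multiset α → Prop
  | refl (t : DTree α) (S : Multiset α) : Occurs t S t S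
  | left {t : DTree α} {S : Multiset α} {σ : α → Bool} {t0 t1 : DTree α}
      {A : Multiset α} : Occurs t S (DTree.node σ t0 t1) A →
      Occurs t S t0 (A.filter fun x => σ x = false)
  | right {t : DTree α} {S : Multiset α} {σ : α → Bool} {t0 t1 : DTree α}
      {A : Multiset α} : Occurs t S (DTree.node σ t0 t1) A →
      Occurs t S t1 (A.filter fun x => σ x = true)

/-- `T` is `ε`-approximate w.r.t. `(S,Φ)`: the decision (split rule or leaf) at each
vertex `v` equals `Φ(S_v)` for some multiset `S_v` with `ED*(S(T,v),S_v) ≤ ε`. -/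
def EpsApproxOn {α : Type} [DecidableEq α] (Φ : Multiset α → Option (α → Bool))
    (ε : ℝ) : DTree α → Multiset α → Prop
  | DTree.leaf, S => ∃ Sv : Multiset α, edStar S Sv ≤ ε ∧ Φ Sv = none
  | DTree.node σ t0 t1, S =>
      (∃ Sv : Multiset α, edStar S Sv ≤ ε ∧ Φ Sv = some σ) ∧
      EpsApproxOn Φ ε t0 (S.filter fun x => σ x = false) ∧
      EpsApproxOn Φ ε t1 (S.filter fun x => σ x = true)

/-! The weighted impurity `|S| · Gini(S)` increases by at most `2` when an example is added to `S`.
As `|S| · GiniGain(S, σ)` is the weighted impurity of `S` minus those of its two parts, only one of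
which receives the new example, it changes by at most `2` as well. Since `|GiniGain| ≤ 1`, dividing
by the size of the larger sample makes `GiniGain(·, σ)` `3`-Lipschitz for `ED*`. Comparing the
sample at a vertex with the one that determined its split rule, once for that rule and once for a
competitor, costs at most `2 · 3ε`. -/

section EditDistance

theorem abs_add_sub_le_mul_card {α : Type*} {f : Multiset α → ℝ} {C : ℝ}
    (hf : ∀ x S, |f (x ::ₘ S) - f S| ≤ C) (U S : Multiset α) :
    |f (U + S) - f S| ≤ C * U.card := by
  induction U using Multiset.induction_on with
  | empty => simp
  | cons x U ih =>
    calc |f (x ::ₘ U + S) - f S|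
        ≤ |f (x ::ₘ U + S) - f (U + S)| + |f (U + S) - f S| := abs_sub_le _ _ _
      _ ≤ C + C * U.card := add_le_add (Multiset.cons_add x U S ▸ hf x (U + S)) ih
      _ = C * (x ::ₘ U).card := by rw [Multiset.card_cons]; push_cast; ring

variable {α : Type} [DecidableEq α]

theorem symmDist_comm (A B : Multiset α) : symmDist A B = symmDist B A :=
  add_comm _ _

theorem edStar_comm (A B : Multiset α) : edStar A B = edStar B A := by
  rw [edStar, edStar, symmDist_comm, max_comm]

theorem card_le_card_add_symmDist (A B : Multiset α) : A.card ≤ B.card + symmDist A B :=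
  calc A.card ≤ (B + (A - B)).card := Multiset.card_le_card le_add_tsub
    _ = B.card + (A - B).card := Multiset.card_add _ _
    _ ≤ B.card + symmDist A B := Nat.add_le_add_left (Nat.le_add_right _ _) _

theorem abs_sub_le_mul_symmDist {f : Multiset α → ℝ} {C : ℝ}
    (hf : ∀ x S, |f (x ::ₘ S) - f S| ≤ C) (A B : Multiset α) :
    |f A - f B| ≤ C * symmDist A B := by
  have hA : |f A - f (A ∩ B)| ≤ C * (A - B).card := by
    simpa only [Multiset.sub_add_inter] using abs_add_sub_le_mul_card hf (A - B) (A ∩ B)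
  have hB : |f B - f (A ∩ B)| ≤ C * (B - A).card := by
    simpa only [Multiset.inter_comm A B, Multiset.sub_add_inter] using
      abs_add_sub_le_mul_card hf (B - A) (B ∩ A)
  calc |f A - f B| ≤ |f A - f (A ∩ B)| + |f (A ∩ B) - f B| := abs_sub_le _ _ _
    _ ≤ C * (A - B).card + C * (B - A).card :=
        add_le_add hA (abs_sub_comm (f B) _ ▸ hB)
    _ = C * symmDist A B := by rw [symmDist]; push_cast; ring

theorem abs_sub_le_mul_edStar {g : Multiset α → ℝ} {M C : ℝ} (hM : ∀ S, |g S| ≤ M)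
    (hC : ∀ x S, |(x ::ₘ S).card * g (x ::ₘ S) - S.card * g S| ≤ C) (A B : Multiset α) :
    |g A - g B| ≤ (M + C) * edStar A B := by
  wlog hBA : B.card ≤ A.card generalizing A B
  · rw [abs_sub_comm, edStar_comm]
    exact this B A (le_of_not_ge hBA)
  rcases A.card.eq_zero_or_pos with hA | hA
  · have hB : B = 0 := Multiset.card_eq_zero.1 (by omega)
    simp [Multiset.card_eq_zero.1 hA, hB, edStar, symmDist]
  have hA' : (0 : ℝ) < A.card := Nat.cast_pos.2 hA
  have hBA' : (B.card : ℝ) ≤ A.card := Nat.cast_le.2 hBA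
  have hcard : (A.card : ℝ) - B.card ≤ symmDist A B :=
    sub_le_iff_le_add'.2 (mod_cast card_le_card_add_symmDist A B)
  have hdrift : |(A.card - B.card : ℝ) * g B| ≤ M * symmDist A B := by
    rw [abs_mul, abs_of_nonneg (sub_nonneg.2 hBA'), mul_comm]
    exact mul_le_mul (hM B) hcard (sub_nonneg.2 hBA') ((abs_nonneg _).trans (hM B))
  rw [edStar, max_eq_left hBA, ← mul_div_assoc, le_div_iff₀ hA']
  calc |g A - g B| * A.card
      = |(A.card * g A - B.card * g B) - (A.card - B.card) * g B| := by
        rw [← abs_of_pos hA', ← abs_mul, abs_of_pos hA']; ring_nf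
    _ ≤ |A.card * g A - B.card * g B| + |(A.card - B.card) * g B| := abs_sub _ _
    _ ≤ C * symmDist A B + M * symmDist A B :=
        add_le_add (abs_sub_le_mul_symmDist (f := fun S => S.card * g S) hC A B) hdrift
    _ = (M + C) * symmDist A B := by ring

end EditDistance

section Impurity

variable {α : Type} {k : ℕ} (lab : α → Fin k)

/-- The relative frequency of the label `i` in the sample `S`, with value `0` on the empty
sample. The Gini impurity is `1` minus the sum of the squared frequencies. -/
noncomputable def labelFreq (S : Multiset α) (i : Fin k) : ℝ :=
  ((S.filter fun x => lab x = i).card : ℝ) / S.card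

theorem labelFreq_nonneg (S : Multiset α) (i : Fin k) : 0 ≤ labelFreq lab S i := by
  unfold labelFreq
  positivity

theorem giniImp_eq_one_sub_sum_sq (S : Multiset α) :
    giniImp lab S = 1 - ∑ i, labelFreq lab S i ^ 2 :=
  rfl

theorem card_mul_labelFreq (S : Multiset α) (i : Fin k) :
    S.card * labelFreq lab S i = (S.filter fun x => lab x = i).card := by
  refine mul_div_cancel_of_imp' fun hS => ?_
  simp [Multiset.card_eq_zero.1 (Nat.cast_eq_zero.1 hS)]

theorem card_mul_labelFreq_cons (x : α) (S : Multiset α) (i : Fin k) :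
    (S.card + 1) * labelFreq lab (x ::ₘ S) i =
      S.card * labelFreq lab S i + if lab x = i then 1 else 0 := by
  rw [← Nat.cast_add_one, ← Multiset.card_cons x S, card_mul_labelFreq, card_mul_labelFreq]
  split_ifs with h <;> simp [h]

theorem sum_labelFreq_le_one (S : Multiset α) : ∑ i, labelFreq lab S i ≤ 1 := by
  have hcount : ∑ i, (S.filter fun x => lab x = i).card = S.card := by
    simpa only [Multiset.count_map, Multiset.card_map, eq_comm] using
      Multiset.sum_count_eq_card (s := Finset.univ) (m := S.map lab) fun _ _ => Finset.mem_univ _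
  unfold labelFreq
  rw [← Finset.sum_div, ← Nat.cast_sum, hcount]
  exact div_self_le_one _

theorem giniImp_nonneg (S : Multiset α) : 0 ≤ giniImp lab S := by
  rw [giniImp_eq_one_sub_sum_sq, sub_nonneg]
  calc ∑ i, labelFreq lab S i ^ 2 ≤ (∑ i, labelFreq lab S i) ^ 2 :=
        Finset.sum_sq_le_sq_sum_of_nonneg fun i _ => labelFreq_nonneg lab S i
    _ ≤ 1 := pow_le_one₀ (Finset.sum_nonneg fun i _ => labelFreq_nonneg lab S i)
        (sum_labelFreq_le_one lab S)

theorem giniImp_le_one (S : Multiset α) : giniImp lab S ≤ 1 :=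
  sub_le_self _ (Finset.sum_nonneg fun _ _ => sq_nonneg _)

theorem sq_card_mul_one_sub_giniImp_cons (x : α) (S : Multiset α) :
    (S.card + 1 : ℝ) ^ 2 * (1 - giniImp lab (x ::ₘ S)) =
      S.card ^ 2 * (1 - giniImp lab S) + 2 * S.card * labelFreq lab S (lab x) + 1 := by
  have hterm (i : Fin k) : (S.card + 1 : ℝ) ^ 2 * labelFreq lab (x ::ₘ S) i ^ 2 =
      S.card ^ 2 * labelFreq lab S i ^ 2 +
        if lab x = i then 2 * S.card * labelFreq lab S i + 1 else 0 := by
    rw [← mul_pow, card_mul_labelFreq_cons]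
    split_ifs <;> ring
  simp only [giniImp_eq_one_sub_sum_sq, sub_sub_cancel, Finset.mul_sum, hterm,
    Finset.sum_add_distrib, Finset.sum_ite_eq, Finset.mem_univ, if_true, add_assoc]

/-- The Gini impurity of a sample weighted by its size, the scale on which adding one example
has a bounded effect. -/
noncomputable def weightedImp (S : Multiset α) : ℝ :=
  S.card * giniImp lab S

theorem weightedImp_cons_sub (x : α) (S : Multiset α) :
    weightedImp lab (x ::ₘ S) - weightedImp lab S =
      S.card * (2 * (1 - labelFreq lab S (lab x)) - giniImp lab S) / (S.card + 1) := by
  have hS : (S.card + 1 : ℝ) ≠ 0 := by positivity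
  rw [weightedImp, weightedImp, Multiset.card_cons, eq_div_iff hS]
  push_cast
  linear_combination -sq_card_mul_one_sub_giniImp_cons lab x S

theorem giniImp_le_two_mul_one_sub_labelFreq (S : Multiset α) (i : Fin k) :
    giniImp lab S ≤ 2 * (1 - labelFreq lab S i) := by
  have hsq : labelFreq lab S i ^ 2 ≤ ∑ j, labelFreq lab S j ^ 2 :=
    Finset.single_le_sum (f := fun j => labelFreq lab S j ^ 2) (fun _ _ => sq_nonneg _)
      (Finset.mem_univ i)
  rw [giniImp_eq_one_sub_sum_sq]
  linarith [sq_nonneg (1 - labelFreq lab S i)]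

theorem weightedImp_le_cons (x : α) (S : Multiset α) :
    weightedImp lab S ≤ weightedImp lab (x ::ₘ S) := by
  rw [← sub_nonneg, weightedImp_cons_sub]
  have := sub_nonneg.2 (giniImp_le_two_mul_one_sub_labelFreq lab S (lab x))
  positivity

theorem weightedImp_cons_le (x : α) (S : Multiset α) :
    weightedImp lab (x ::ₘ S) ≤ weightedImp lab S + 2 := by
  rw [← sub_le_iff_le_add', weightedImp_cons_sub, div_le_iff₀ (by positivity)]
  have hle : 2 * (1 - labelFreq lab S (lab x)) - giniImp lab S ≤ 2 := by
    linarith [labelFreq_nonneg lab S (lab x), giniImp_nonneg lab S]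
  linarith [mul_le_mul_of_nonneg_left hle (Nat.cast_nonneg (α := ℝ) S.card)]

end Impurity

section Gain

variable {α : Type} {k : ℕ} (lab : α → Fin k) (σ : α → Bool)

theorem card_mul_giniGain (S : Multiset α) :
    S.card * giniGain lab σ S = weightedImp lab S
      - weightedImp lab (S.filter fun x => σ x = false)
      - weightedImp lab (S.filter fun x => σ x = true) := by
  rcases eq_or_ne S 0 with rfl | hS
  · simp [weightedImp]
  have hcard : (S.card : ℝ) ≠ 0 := Nat.cast_ne_zero.2 (mt Multiset.card_eq_zero.1 hS)
  unfold giniGain weightedImp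
  field_simp

theorem abs_card_mul_giniGain_cons_sub_le (x : α) (S : Multiset α) :
    |(x ::ₘ S).card * giniGain lab σ (x ::ₘ S) - S.card * giniGain lab σ S| ≤ 2 := by
  have hmono := weightedImp_le_cons lab x
  have hstep := weightedImp_cons_le lab x
  rw [card_mul_giniGain, card_mul_giniGain, abs_le]
  cases hx : σ x
  · rw [Multiset.filter_cons_of_pos (p := fun y => σ y = false) _ hx,
      Multiset.filter_cons_of_neg (p := fun y => σ y = true) _ (by simp [hx])]
    constructor <;> linarith [hmono S, hstep S, hmono (S.filter fun y => σ y = false),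
      hstep (S.filter fun y => σ y = false)]
  · rw [Multiset.filter_cons_of_neg (p := fun y => σ y = false) _ (by simp [hx]),
      Multiset.filter_cons_of_pos (p := fun y => σ y = true) _ hx]
    constructor <;> linarith [hmono S, hstep S, hmono (S.filter fun y => σ y = true),
      hstep (S.filter fun y => σ y = true)]

theorem abs_giniGain_le_one (S : Multiset α) : |giniGain lab σ S| ≤ 1 := by
  set S₀ := S.filter fun x => σ x = false with hS₀
  set S₁ := S.filter fun x => σ x = true with hS₁
  have hcard : S₀.card + S₁.card = S.card := by
    rw [← Multiset.card_add]
    simpa only [Bool.not_eq_false] using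
      congrArg Multiset.card (Multiset.filter_add_not (fun x => σ x = false) S)
  have hweights : (S₀.card / S.card : ℝ) + S₁.card / S.card ≤ 1 := by
    rw [← add_div, ← Nat.cast_add, hcard]
    exact div_self_le_one _
  have hw₀ : (0 : ℝ) ≤ S₀.card / S.card := by positivity
  have hw₁ : (0 : ℝ) ≤ S₁.card / S.card := by positivity
  rw [giniGain, ← hS₀, ← hS₁, abs_le]
  constructor <;> linarith [giniImp_nonneg lab S, giniImp_le_one lab S,
    mul_nonneg hw₀ (giniImp_nonneg lab S₀), mul_nonneg hw₁ (giniImp_nonneg lab S₁),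
    mul_le_of_le_one_right hw₀ (giniImp_le_one lab S₀),
    mul_le_of_le_one_right hw₁ (giniImp_le_one lab S₁)]

theorem abs_giniGain_sub_le_mul_edStar [DecidableEq α] (A B : Multiset α) :
    |giniGain lab σ A - giniGain lab σ B| ≤ 3 * edStar A B := by
  convert abs_sub_le_mul_edStar (abs_giniGain_le_one lab σ)
    (abs_card_mul_giniGain_cons_sub_le lab σ) A B using 2
  norm_num

end Gain

section DecisionTree

variable {α : Type} [DecidableEq α] {Φ : Multiset α → Option (α → Bool)} {ε : ℝ}

theorem Occurs.epsApproxOn {T t : DTree α} {S A : Multiset α} (hocc : Occurs T S t A)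
    (happ : EpsApproxOn Φ ε T S) : EpsApproxOn Φ ε t A := by
  induction hocc with
  | refl => exact happ
  | left _ ih => exact ih.2.1
  | right _ ih => exact ih.2.2

theorem EpsApproxOn.sub_two_mul_le_of_lipschitz {G : (α → Bool) → Multiset α → ℝ} {L : ℝ}
    (hL : 0 ≤ L) (hG : ∀ σ A B, |G σ A - G σ B| ≤ L * edStar A B) {𝒮 : Set (α → Bool)}
    (hmax : ∀ A σ, Φ A = some σ → ∀ τ ∈ 𝒮, G τ A ≤ G σ A)
    {σ : α → Bool} {t0 t1 : DTree α} {A : Multiset α}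
    (happ : EpsApproxOn Φ ε (DTree.node σ t0 t1) A) {τ : α → Bool} (hτ : τ ∈ 𝒮) :
    G τ A - 2 * (L * ε) ≤ G σ A := by
  obtain ⟨⟨B, hAB, hΦ⟩, -⟩ := happ
  have hclose (ρ : α → Bool) : |G ρ A - G ρ B| ≤ L * ε :=
    (hG ρ A B).trans (mul_le_mul_of_nonneg_left hAB hL)
  calc G τ A - 2 * (L * ε) ≤ G τ B - L * ε := by linarith [(abs_le.1 (hclose τ)).2]
    _ ≤ G σ B - L * ε := sub_le_sub_right (hmax B σ hΦ τ hτ) _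
    _ ≤ G σ A := by linarith [(abs_le.1 (hclose σ)).1]

end DecisionTree

theorem stmt17_general {α : Type} [DecidableEq α] {k : ℕ} (lab : α → Fin k)
    (𝒮 : Set (α → Bool)) (Φ : Multiset α → Option (α → Bool)) (ε : ℝ)
    (hmax : ∀ (A : Multiset α) (σ : α → Bool), Φ A = some σ →
      ∀ τ ∈ 𝒮, giniGain lab τ A ≤ giniGain lab σ A)
    (T : DTree α) (S : Multiset α) (happ : EpsApproxOn Φ ε T S)
    {σ : α → Bool} {t0 t1 : DTree α} {A : Multiset α}
    (hocc : Occurs T S (DTree.node σ t0 t1) A) :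
    ∀ τ ∈ 𝒮, giniGain lab τ A - 6 * ε ≤ giniGain lab σ A := by
  intro τ hτ
  linarith [(hocc.epsApproxOn happ).sub_two_mul_le_of_lipschitz zero_le_three
    (fun ρ => abs_giniGain_sub_le_mul_edStar lab ρ) hmax hτ]

/-- If `Φ` is a max-Gini-gain decision rule over the family `𝒮` of split rules and
`T` is `ε`-approximate w.r.t. `(S,Φ)`, then at every internal vertex `v` of `T` the
split rule `σ_v` has Gini gain on `S(T,v)` within `96ε` of the maximum over `𝒮`. -/
theorem stmt17 {α : Type} [DecidableEq α] {k : ℕ} (lab : α → Fin k)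
    (𝒮 : Set (α → Bool)) (Φ : Multiset α → Option (α → Bool))
    (ε : ℝ) (hε0 : 0 ≤ ε) (hε1 : ε < 1)
    (hmax : ∀ (A : Multiset α) (σ : α → Bool), Φ A = some σ →
      σ ∈ 𝒮 ∧ ∀ τ ∈ 𝒮, giniGain lab τ A ≤ giniGain lab σ A)
    (T : DTree α) (S : Multiset α) (hS : S ≠ 0)
    (happ : EpsApproxOn Φ ε T S)
    {σ : α → Bool} {t0 t1 : DTree α} {A : Multiset α}
    (hocc : Occurs T S (DTree.node σ t0 t1) A) :
    ∀ τ ∈ 𝒮, giniGain lab τ A - 96 * ε ≤ giniGain lab σ A := by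
  intro τ hτ
  linarith [stmt17_general lab 𝒮 Φ ε (fun A σ h => (hmax A σ h).2) T S happ hocc τ hτ]
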